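/- Let k ≥ 7 be an odd integer and let d ≥ 4 be an integer. Then both polynomials H_{d−1}(x) − 2 and H_{d−1}(x) + 2 are irreducible over ℚ[x], where H_{d−1} is the Dickson polynomial with parameter k−1. -/

import Mathlib

open Polynomial SimpleGraph

/-- Dickson polynomials of the second kind with parameter `k - 1`:
`H 0 = 1`, `H 1 = X`, `H (i+2) = X * H (i+1) - (k-1) * H i`. -/
noncomputable def dicksonH (k : ℕ) : ℕ → Polynomial ℤ
  | 0 => 1
  | 1 => Polynomial.X
  | n + 2 => Polynomial.X * dicksonH k (n + 1) - Polynomial.C ((k : ℤ) - 1) * dicksonH k n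

theorem dicksonH_add_two (k n : ℕ) :
    dicksonH k (n + 2) = X * dicksonH k (n + 1) - C ((k : ℤ) - 1) * dicksonH k n := by
  rw [dicksonH]

theorem dicksonH_monic_and_degree (k n : ℕ) :
    (dicksonH k n).Monic ∧ (dicksonH k n).degree = n := by
  induction n using Nat.twoStepInduction with
  | zero => simp [dicksonH]
  | one => simp [dicksonH, monic_X]
  | more n ih ih' =>
    have hdeg : (X * dicksonH k (n + 1)).degree = ((n + 2 : ℕ) : WithBot ℕ) := by
      rw [degree_mul, degree_X, ih'.2, ← Nat.cast_one, ← Nat.cast_add]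
      congr 1
      omega
    have hlt : (C ((k : ℤ) - 1) * dicksonH k n).degree < (X * dicksonH k (n + 1)).degree := by
      rw [hdeg]
      calc (C ((k : ℤ) - 1) * dicksonH k n).degree
          ≤ (dicksonH k n).degree := by
            rw [← smul_eq_C_mul]
            exact degree_smul_le _ _
        _ < ((n + 2 : ℕ) : WithBot ℕ) := by
            rw [ih.2]
            exact_mod_cast (by omega : n < n + 2)
    rw [dicksonH_add_two]
    exact ⟨(monic_X.mul ih'.1).sub_of_left hlt, by rw [degree_sub_eq_left_of_degree_lt hlt, hdeg]⟩

theorem two_dvd_coeff_dicksonH {k : ℕ} (hk : Odd k) {n i : ℕ} (hi : i < n) :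
    2 ∣ (dicksonH k n).coeff i := by
  have hq : (2 : ℤ) ∣ (k : ℤ) - 1 := by
    obtain ⟨m, rfl⟩ := hk
    exact ⟨m, by push_cast; ring⟩
  induction n using Nat.twoStepInduction generalizing i with
  | zero => omega
  | one =>
    obtain rfl : i = 0 := by omega
    simp [dicksonH]
  | more n _ ih' =>
    rw [dicksonH_add_two, coeff_sub, coeff_C_mul]
    refine dvd_sub ?_ (hq.mul_right _)
    cases i with
    | zero => simp
    | succ i =>
      rw [coeff_X_mul]
      exact ih' (by omega)

theorem four_dvd_coeff_zero_dicksonH {k : ℕ} (hk : Odd k) (n : ℕ) :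
    4 ∣ (dicksonH k (n + 3)).coeff 0 := by
  induction n using Nat.twoStepInduction with
  | zero => simp [dicksonH]
  | one =>
    obtain ⟨m, rfl⟩ := hk
    refine ⟨m ^ 2, ?_⟩
    simp [dicksonH]
    ring
  | more n ih _ =>
    rw [dicksonH_add_two, coeff_sub, coeff_C_mul, coeff_X_mul_zero, zero_sub, dvd_neg]
    exact ih.mul_left _

/-- Eisenstein's criterion at `2`: shifting `H n`, `n ≥ 3`, by a constant congruent to `2`
modulo `4` gives an irreducible polynomial. -/
theorem irreducible_dicksonH_add_C {k : ℕ} (hk : Odd k) {n : ℕ} (hn : 3 ≤ n) {c : ℤ}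
    (h2 : 2 ∣ c) (h4 : ¬ 4 ∣ c) :
    Irreducible ((dicksonH k n + C c).map (Int.castRingHom ℚ)) := by
  obtain ⟨hm, hd⟩ := dicksonH_monic_and_degree k n
  have hlt : (C c).degree < (dicksonH k n).degree := by
    rw [hd]
    exact degree_C_le.trans_lt (by exact_mod_cast (by omega : 0 < n))
  have hmonic : (dicksonH k n + C c).Monic := hm.add_of_left hlt
  have hdeg : (dicksonH k n + C c).natDegree = n :=
    natDegree_eq_of_degree_eq_some (by rw [degree_add_eq_left_of_degree_lt hlt, hd])
  have hEis : (dicksonH k n + C c).IsEisensteinAt (Ideal.span {2}) := by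
    refine ⟨?_, fun {i} hi => ?_, ?_⟩
    · rw [hmonic.leadingCoeff, Ideal.mem_span_singleton]
      decide
    · rw [hdeg] at hi
      rw [Ideal.mem_span_singleton, coeff_add, coeff_C]
      refine dvd_add (two_dvd_coeff_dicksonH hk hi) ?_
      split_ifs
      exacts [h2, dvd_zero _]
    · rw [Ideal.span_singleton_pow, Ideal.mem_span_singleton, coeff_add, coeff_C_zero]
      obtain ⟨m, rfl⟩ := Nat.exists_eq_add_of_le' hn
      have := four_dvd_coeff_zero_dicksonH hk m
      norm_num
      omega
  have hprime : (Ideal.span {(2 : ℤ)}).IsPrime :=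
    (Ideal.span_singleton_prime two_ne_zero).2 Int.prime_two
  exact (hmonic.irreducible_iff_irreducible_map_fraction_map (K := ℚ)).1
    (hEis.irreducible hprime hmonic.isPrimitive (by omega))

/-- For odd `k ≥ 7` and `d ≥ 4`, both `H_{d-1}(x) - 2` and `H_{d-1}(x) + 2` are irreducible
over `ℚ[x]`. -/
theorem dicksonH_pm_two_irreducible (k d : ℕ) (hk : 7 ≤ k) (hkodd : Odd k) (hd : 4 ≤ d) :
    Irreducible ((dicksonH k (d - 1) - 2).map (Int.castRingHom ℚ)) ∧
    Irreducible ((dicksonH k (d - 1) + 2).map (Int.castRingHom ℚ)) := by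
  have hn : 3 ≤ d - 1 := by omega
  constructor
  · have h := irreducible_dicksonH_add_C hkodd hn (c := -2) (by decide) (by decide)
    rwa [C_neg, ← sub_eq_add_neg] at h
  · exact irreducible_dicksonH_add_C hkodd hn (c := 2) (by decide) (by decide)
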